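/- arXiv:1902.07758 — 2 statements merged into one kernel-verified Lean document; each statement's English description precedes it below -/
import Mathlib

section
/- Every subgroup of GL₂(F₇) of order 144 = 2⁴·3² acts transitively on the 48 nonzero vectors of the natural module F₇². -/
open Matrix

/-!
Let `G` act faithfully and linearly on a plane over a field with `q > 3` elements, let
`2 |G| = (q² - 1)(q - 1)`, and let `S` be the stabilizer of a nonzero vector `v`. As `|G|` is prime
to the characteristic, averaging over `S` gives an `S`-stable complement of the line of `v`, on
which `S` acts by an injective character. Hence `|S|` divides `q - 1`. If `|S| ≤ (q - 1) / 2`, the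
orbit of `v` has at least `q² - 1` elements and is everything.

Otherwise `S` is the full group of matrices `diag(1, d)` and the orbit has `(q² - 1) / 2` elements.
It is a union of `S`-orbits, which have `q - 1` elements off the line of `v`; counting modulo
`q - 1` shows that the orbit contains all nonzero multiples of `v`, so it is stable under all
`diag(c, d)`. Such a set contains all `(q - 1)²` vectors off the two axes or none of them, and in
the second case it has at most `2 (q - 1)` elements; for `q > 3` neither fits `(q² - 1) / 2`.
-/

section Counting

theorem ncard_compl_singleton {α : Type*} [Finite α] (a : α) :
    ({a}ᶜ : Set α).ncard = Nat.card α - 1 := by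
  rw [Set.ncard_compl, Set.ncard_singleton]

theorem ncard_eq_ncard_add_mul_ncard {α K : Type*} [GroupWithZero K] [Finite α] [Finite K]
    {s : Set (α × K)} (hs : ∀ a d, (a, d) ∈ s → ∀ u : Kˣ, (a, u * d) ∈ s) :
    s.ncard = {a | (a, 0) ∈ s}.ncard + {a | (a, 1) ∈ s}.ncard * (Nat.card K - 1) := by
  have hunion : s = {a | (a, 0) ∈ s} ×ˢ {0} ∪ {a | (a, 1) ∈ s} ×ˢ {0}ᶜ := by
    ext ⟨a, d⟩
    rcases eq_or_ne d 0 with rfl | hd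
    · simp
    · have hiff : (a, d) ∈ s ↔ (a, 1) ∈ s :=
        ⟨fun h ↦ by simpa [hd] using hs a d h (Units.mk0 d hd)⁻¹,
          fun h ↦ by simpa using hs a 1 h (Units.mk0 d hd)⟩
      simp [hd, hiff]
  have hdisj : Disjoint ({a | (a, 0) ∈ s} ×ˢ {(0 : K)}) ({a | (a, 1) ∈ s} ×ˢ {0}ᶜ) :=
    Set.disjoint_prod.mpr (.inr disjoint_compl_right)
  conv_lhs => rw [hunion]
  rw [Set.ncard_union_eq hdisj, Set.ncard_prod, Set.ncard_prod, Set.ncard_singleton, mul_one,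
    ncard_compl_singleton]

theorem ncard_le_one_or_le_ncard_of_forall_units_mul_mem {K : Type*} [GroupWithZero K] [Finite K]
    {s : Set K} (hs : ∀ a ∈ s, ∀ u : Kˣ, u * a ∈ s) :
    s.ncard ≤ 1 ∨ Nat.card K - 1 ≤ s.ncard := by
  by_cases h : s ⊆ {0}
  · exact .inl ((Set.ncard_le_ncard h).trans_eq (Set.ncard_singleton 0))
  · right
    obtain ⟨a, ha, (ha0 : a ≠ 0)⟩ := Set.not_subset.mp h
    have hsub : ({0}ᶜ : Set K) ⊆ s := fun b (hb : b ≠ 0) ↦ by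
      simpa [ha0] using hs a ha (Units.mk0 b hb * (Units.mk0 a ha0)⁻¹)
    exact (ncard_compl_singleton (0 : K)).symm.trans_le (Set.ncard_le_ncard hsub)

theorem eq_and_two_mul_eq_of_two_mul_add_eq {n a t : ℕ} (ha : 0 < a) (han : a ≤ n)
    (h : 2 * (a + t * n) = n * (n + 2)) : a = n ∧ 2 * t = n := by
  have hle : 2 * t ≤ n + 2 := by nlinarith
  obtain ⟨m, hm⟩ := Nat.exists_eq_add_of_le hle
  have hmn : m * n = 2 * a := by
    have : n * (n + 2) = 2 * t * n + m * n := by rw [hm]; ring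
    linarith
  have hm_le : m ≤ 2 := by nlinarith
  interval_cases m <;> omega

theorem two_mul_ncard_ne_card_sq_sub_one {K : Type*} [GroupWithZero K] [Finite K]
    (hK : 3 < Nat.card K) {s : Set (K × K)} (hzero : (0, 0) ∉ s) (hone : (1, 0) ∈ s)
    (hunits : ∀ a d, (a, d) ∈ s → ∀ u : Kˣ, (a, u * d) ∈ s)
    (hsmul : ∀ c, (c, 0) ∈ s → ∀ p ∈ s, c • p ∈ s) :
    2 * s.ncard ≠ Nat.card K ^ 2 - 1 := by
  intro hcard
  have hsub : {a | (a, 0) ∈ s} ⊆ {0}ᶜ := by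
    rintro _ h rfl
    exact hzero h
  obtain ⟨hline, hpart⟩ : {a | (a, 0) ∈ s}.ncard = Nat.card K - 1 ∧
      2 * {a | (a, 1) ∈ s}.ncard = Nat.card K - 1 := by
    refine eq_and_two_mul_eq_of_two_mul_add_eq ((Set.ncard_pos).mpr ⟨1, hone⟩)
      (ncard_compl_singleton (0 : K) ▸ Set.ncard_le_ncard hsub) ?_
    rw [← ncard_eq_ncard_add_mul_ncard hunits, hcard, ← one_pow 2, Nat.sq_sub_sq, mul_comm]
    congr 1
    omega
  have hline_eq : {a | (a, 0) ∈ s} = {0}ᶜ :=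
    Set.eq_of_subset_of_ncard_le hsub (by rw [hline, ncard_compl_singleton])
  have hstable : ∀ a ∈ {a | (a, 1) ∈ s}, ∀ u : Kˣ, u * a ∈ {a | (a, 1) ∈ s} := fun a ha u ↦ by
    have hu : (u : K) ∈ {a | (a, 0) ∈ s} := hline_eq ▸ u.ne_zero
    simpa using hunits _ _ (hsmul u hu _ ha) u⁻¹
  rcases ncard_le_one_or_le_ncard_of_forall_units_mul_mem hstable with h | h <;> omega

end Counting

section LinearAction

variable {K V G : Type*} [Field K] [AddCommGroup V] [Module K V]

theorem smul_mem_orbit_of_smul_mem_orbit {M X : Type*} [Group G] [MulAction G X] [SMul M X]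
    [SMulCommClass G M X] {c : M} {x y : X} (hc : c • x ∈ MulAction.orbit G x)
    (hy : y ∈ MulAction.orbit G x) : c • y ∈ MulAction.orbit G x := by
  obtain ⟨g, rfl⟩ := hy
  change c • g • x ∈ _
  rw [← smul_comm]
  exact MulAction.mem_orbit_of_mem_orbit g hc

variable [Group G] [DistribMulAction G V] [SMulCommClass G K V]

theorem exists_invariant_dual (hG : (Nat.card G : K) ≠ 0) {v : V} (hv : v ≠ 0)
    (hfix : ∀ g : G, g • v = v) :
    ∃ ψ : Module.Dual K V, ψ v = 1 ∧ ∀ (g : G) x, ψ (g • x) = ψ x := by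
  have : Finite G := Nat.finite_of_card_ne_zero fun h ↦ hG (by simp [h])
  have := Fintype.ofFinite G
  obtain ⟨φ, hφ⟩ := Module.Projective.exists_dual_eq_one K hv
  refine ⟨(Nat.card G : K)⁻¹ • ∑ g : G, φ ∘ₗ DistribSMul.toLinearMap K V g, ?_, fun g x ↦ ?_⟩
  · simpa [hfix, hφ] using inv_mul_cancel₀ hG
  · have hsum : ∑ h : G, φ (h • g • x) = ∑ h : G, φ (h • x) :=
      Fintype.sum_equiv (Equiv.mulRight g) _ _ fun h ↦ by simp [mul_smul]
    simp [hsum]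

theorem exists_character_of_forall_exists_smul_eq {y : V} (hy : y ≠ 0)
    (h : ∀ g : G, ∃ c : K, g • y = c • y) : ∃ χ : G →* Kˣ, ∀ g : G, g • y = χ g • y := by
  choose c hc using h
  have hinj := smul_left_injective K hy
  let χ : G →* K :=
    { toFun := c
      map_one' := hinj (by simp [← hc])
      map_mul' := fun g g' ↦ hinj <| by
        simp only [← hc, mul_smul]
        rw [hc g', smul_comm, hc g, smul_comm] }
  exact ⟨χ.toHomUnits, hc⟩

theorem exists_linearEquiv_smul_eq (hV : Module.finrank K V = 2) (hG : (Nat.card G : K) ≠ 0)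
    {v : V} (hv : v ≠ 0) (hfix : ∀ g : G, g • v = v) :
    ∃ (e : (K × K) ≃ₗ[K] V) (χ : G →* Kˣ),
      e (1, 0) = v ∧ ∀ (g : G) a d, g • e (a, d) = e (a, χ g * d) := by
  have : FiniteDimensional K V := Module.finite_of_finrank_pos (by omega)
  obtain ⟨ψ, hψv, hψ⟩ := exists_invariant_dual hG hv hfix
  have hker : Module.finrank K ψ.ker = 1 := by
    have := Module.Dual.finrank_ker_add_one_of_ne_zero (f := ψ) (by rintro rfl; simp at hψv)
    omega
  obtain ⟨⟨y, hψy⟩, hy, hspan⟩ := finrank_eq_one_iff'.mp hker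
  replace hy : y ≠ 0 := fun h ↦ hy (Subtype.ext h)
  rw [LinearMap.mem_ker] at hψy
  obtain ⟨χ, hχ⟩ : ∃ χ : G →* Kˣ, ∀ g : G, g • y = χ g • y := by
    refine exists_character_of_forall_exists_smul_eq hy fun g ↦ ?_
    obtain ⟨c, hc⟩ := hspan ⟨g • y, by rw [LinearMap.mem_ker, hψ, hψy]⟩
    exact ⟨c, (congrArg Subtype.val hc).symm⟩
  let f : (K × K) →ₗ[K] V :=
    (LinearMap.toSpanSingleton K V v).coprod (LinearMap.toSpanSingleton K V y)
  have hf : ∀ a d, f (a, d) = a • v + d • y := fun a d ↦ by simp [f]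
  have hinj : Function.Injective f := by
    refine (injective_iff_map_eq_zero f).mpr fun ⟨a, d⟩ h ↦ ?_
    rw [hf] at h
    obtain rfl : a = 0 := by simpa [hψv, hψy] using congrArg ψ h
    simpa [hy] using h
  refine ⟨f.linearEquivOfInjective hinj (by simp [hV]), χ, by simp [hf], fun g a d ↦ ?_⟩
  simp only [LinearMap.linearEquivOfInjective_apply, hf, smul_add, smul_comm g, hfix, hχ,
    Units.smul_def, smul_smul, mul_comm d]

theorem exists_linearEquiv_smul_eq_injective [FaithfulSMul G V] (hV : Module.finrank K V = 2)
    (hG : (Nat.card G : K) ≠ 0) {v : V} (hv : v ≠ 0) (hfix : ∀ g : G, g • v = v) :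
    ∃ (e : (K × K) ≃ₗ[K] V) (χ : G →* Kˣ), Function.Injective χ ∧
      e (1, 0) = v ∧ ∀ (g : G) a d, g • e (a, d) = e (a, χ g * d) := by
  obtain ⟨e, χ, he, hχ⟩ := exists_linearEquiv_smul_eq hV hG hv hfix
  refine ⟨e, χ, (injective_iff_map_eq_one χ).mpr fun g hg ↦ ?_, he, hχ⟩
  refine eq_of_smul_eq_smul fun x : V ↦ ?_
  obtain ⟨⟨a, d⟩, rfl⟩ := e.surjective x
  simp [hχ, hg]

theorem card_dvd_card_sub_one_of_forall_smul_eq [FaithfulSMul G V]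
    (hV : Module.finrank K V = 2) (hG : (Nat.card G : K) ≠ 0) {v : V} (hv : v ≠ 0)
    (hfix : ∀ g : G, g • v = v) : Nat.card G ∣ Nat.card K - 1 := by
  obtain ⟨-, χ, hχ, -⟩ := exists_linearEquiv_smul_eq_injective hV hG hv hfix
  exact Nat.card_units K ▸ Subgroup.card_dvd_of_injective χ hχ

theorem natCast_natCard_eq_zero [Finite K] : (Nat.card K : K) = 0 := by
  have := Fintype.ofFinite K
  rw [Nat.card_eq_fintype_card, FiniteField.cast_card_eq_zero]

theorem two_mul_ncard_orbit_ne_card_sq_sub_one [Finite K] [FaithfulSMul G V]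
    (hV : Module.finrank K V = 2) (hK : 3 < Nat.card K) {v : V} (hv : v ≠ 0)
    (hS : Nat.card (MulAction.stabilizer G v) = Nat.card K - 1) :
    2 * (MulAction.orbit G v).ncard ≠ Nat.card K ^ 2 - 1 := by
  have hS_ne : (Nat.card (MulAction.stabilizer G v) : K) ≠ 0 := by
    rw [hS, Nat.cast_pred Nat.card_pos, natCast_natCard_eq_zero, zero_sub]
    exact neg_ne_zero.mpr one_ne_zero
  obtain ⟨e, χ, hχ_inj, he, hχ⟩ := exists_linearEquiv_smul_eq_injective hV hS_ne hv fun s ↦ s.2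
  have hχ_surj : Function.Surjective χ :=
    (hχ_inj.bijective_of_nat_card_le (by rw [Nat.card_units, hS])).2
  have hpre : (e ⁻¹' MulAction.orbit G v).ncard = (MulAction.orbit G v).ncard :=
    Set.ncard_preimage_of_injective_subset_range e.injective (by simp [e.surjective.range_eq])
  rw [← hpre]
  refine two_mul_ncard_ne_card_sq_sub_one hK ?_ ?_ (fun a d h u ↦ ?_) (fun c hc p hp ↦ ?_)
  · rintro ⟨g, hg⟩
    rw [Prod.mk_zero_zero, map_zero] at hg
    exact hv ((smul_eq_zero_iff_eq g).mp hg)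
  · rw [Set.mem_preimage, he]
    exact MulAction.mem_orbit_self v
  · obtain ⟨s, rfl⟩ := hχ_surj u
    rw [Set.mem_preimage, ← hχ]
    exact MulAction.mem_orbit_of_mem_orbit s.1 h
  · have hcv : c • v ∈ MulAction.orbit G v := by
      rw [← he, ← map_smul, he, Prod.smul_mk, smul_eq_mul, mul_one, smul_zero]
      exact hc
    rw [Set.mem_preimage, map_smul]
    exact smul_mem_orbit_of_smul_mem_orbit hcv hp

theorem natCast_ne_zero_of_two_mul_eq [Finite K] {n : ℕ}
    (h : 2 * n = (Nat.card K ^ 2 - 1) * (Nat.card K - 1)) : (n : K) ≠ 0 := by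
  intro hn
  have hcast := congrArg (Nat.cast : ℕ → K) h
  rw [Nat.cast_mul, Nat.cast_mul, Nat.cast_pred Nat.card_pos,
    Nat.cast_pred (pow_pos Nat.card_pos 2), Nat.cast_pow, hn, natCast_natCard_eq_zero] at hcast
  simp at hcast

theorem subgroup_GL2_F7_order_144_transitive_on_nonzero_vectors_general [Finite K]
    [FaithfulSMul G V] (hV : Module.finrank K V = 2) (hK : 3 < Nat.card K)
    (hG : 2 * Nat.card G = (Nat.card K ^ 2 - 1) * (Nat.card K - 1))
    {v w : V} (hv : v ≠ 0) (hw : w ≠ 0) : ∃ g : G, g • v = w := by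
  have : FiniteDimensional K V := Module.finite_of_finrank_pos (by omega)
  have : Finite V := Module.finite_of_finite K
  have hS_ne : (Nat.card (MulAction.stabilizer G v) : K) ≠ 0 := fun h ↦
    natCast_ne_zero_of_two_mul_eq hG <| by
      rw [← (MulAction.stabilizer G v).index_mul_card, Nat.cast_mul, h, mul_zero]
  have hsub : MulAction.orbit G v ⊆ {0}ᶜ := by
    rintro _ ⟨g, rfl⟩
    exact (smul_ne_zero_iff_ne g).mpr hv
  have hcompl : ({0}ᶜ : Set V).ncard = Nat.card K ^ 2 - 1 := by
    rw [ncard_compl_singleton, Module.natCard_eq_pow_finrank (K := K), hV]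
  obtain ⟨m, hm⟩ := card_dvd_card_sub_one_of_forall_smul_eq hV hS_ne hv fun s ↦ s.2
  have horbit : 2 * (MulAction.orbit G v).ncard = (Nat.card K ^ 2 - 1) * m := by
    have hS : 0 < Nat.card (MulAction.stabilizer G v) :=
      Nat.pos_of_ne_zero fun h ↦ by rw [h, zero_mul] at hm; omega
    refine Nat.eq_of_mul_eq_mul_right hS ?_
    rw [mul_assoc, ← MulAction.index_stabilizer, Subgroup.index_mul_card, hG, hm, mul_assoc,
      mul_comm m]
  have hm_zero : m ≠ 0 := by rintro rfl; omega
  have hm_one : m ≠ 1 := by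
    rintro rfl
    rw [mul_one] at hm horbit
    exact two_mul_ncard_orbit_ne_card_sq_sub_one hV hK hv hm.symm horbit
  have horbit_eq : MulAction.orbit G v = {0}ᶜ := by
    refine Set.eq_of_subset_of_ncard_le hsub ?_
    have : 2 ≤ m := by omega
    nlinarith
  exact horbit_eq.superset hw

end LinearAction

instance faithfulSMul_matrix_pi {n R : Type*} [Fintype n] [DecidableEq n] [Semiring R] :
    FaithfulSMul (Matrix n n R) (n → R) where
  eq_of_smul_eq_smul := Matrix.ext_iff_smul.mpr

/-- Every subgroup of `GL₂(F₇)` of order `144 = 2⁴·3²` acts transitively on the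
48 nonzero vectors of the natural module `F₇²`. -/
theorem subgroup_GL2_F7_order_144_transitive_on_nonzero_vectors
    (H : Subgroup (GL (Fin 2) (ZMod 7))) (hH : Nat.card H = 144)
    (v w : Fin 2 → ZMod 7) (hv : v ≠ 0) (hw : w ≠ 0) :
    ∃ g ∈ H, (g : Matrix (Fin 2) (Fin 2) (ZMod 7)).mulVec v = w := by
  have : Fact (Nat.Prime 7) := ⟨by norm_num⟩
  obtain ⟨g, hg⟩ := subgroup_GL2_F7_order_144_transitive_on_nonzero_vectors_general (K := ZMod 7)
    (G := H) (by simp) (by simp) (by simp [hH]) hv hw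
  exact ⟨g, g.2, hg⟩
end

section
/- Any two subgroups of GL₂(F₇) of order 144 = 2⁴·3² are conjugate in GL₂(F₇). -/
open Matrix

/-!
Call an element of `GL₂(F₇)` with eigenvalues `1` and `2` a triflection. A subgroup `H` of order
`144` has order prime to `7`, so it contains no parabolic element, and index prime to `3`, so after
conjugation it contains the group of diagonal matrices whose entries are cube roots of unity.
Multiplying a non-diagonal triflection of `H` by such diagonal matrices must never produce a
parabolic element, and this leaves very few possibilities for its entries. A further conjugation by
a diagonal matrix puts one explicit triflection into `H`, and then the triflections of `H` lie in an
explicit set of eight. Orbit-stabilizer forces `H` to contain all eight and to be the full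
normalizer of this set, so all subgroups of order `144` are conjugate to one and the same group.
-/

open scoped Pointwise

section Group

variable {G : Type*} [Group G]

theorem exists_le_conj_smul_of_isPGroup {p : ℕ} [Fact p.Prime] {P H : Subgroup G}
    (hP : IsPGroup p P) (hH : ¬ p ∣ H.index) : ∃ g : G, P ≤ MulAut.conj g • H := by
  obtain ⟨x, hx⟩ := hP.nonempty_fixed_point_of_prime_not_dvd_card (G ⧸ H) hH
  obtain ⟨g, rfl⟩ := QuotientGroup.mk_surjective x
  refine ⟨g, fun t ht ↦ ?_⟩
  have hfix : (QuotientGroup.mk (t * g) : G ⧸ H) = QuotientGroup.mk g := hx ⟨t, ht⟩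
  rw [Subgroup.mem_pointwise_smul_iff_inv_smul_mem, ← map_inv]
  simpa [mul_assoc] using QuotientGroup.eq.1 hfix.symm

theorem card_le_ncard_mul_card_centralizer_inf {H : Subgroup G} {S : Set G} (hS : S.Finite) {x : G}
    (h : ∀ g ∈ H, g * x * g⁻¹ ∈ S) :
    Nat.card H ≤ S.ncard * Nat.card (Subgroup.centralizer {x} ⊓ H : Subgroup G) := by
  let _ : MulAction H G := MulAction.compHom G (ConjAct.toConjAct.toMonoidHom.comp H.subtype)
  have hstab : MulAction.stabilizer H x = (Subgroup.centralizer {x}).subgroupOf H := by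
    rw [Subgroup.centralizer_eq_comap_stabilizer]; rfl
  have horbit : MulAction.orbit H x ⊆ S := by
    rintro _ ⟨g, rfl⟩
    exact h g g.2
  calc Nat.card H
      = (Subgroup.centralizer {x}).relIndex H
          * Nat.card (Subgroup.centralizer {x} ⊓ H : Subgroup G) := by
        rw [← Subgroup.inf_relIndex_right, mul_comm, ← Subgroup.relIndex_bot_left,
          ← Subgroup.relIndex_bot_left, Subgroup.relIndex_mul_relIndex _ _ _ bot_le inf_le_right]
    _ = (MulAction.orbit H x).ncard
          * Nat.card (Subgroup.centralizer {x} ⊓ H : Subgroup G) := by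
        rw [Subgroup.relIndex, ← hstab, MulAction.index_stabilizer]
    _ ≤ _ := Nat.mul_le_mul_right _ (Set.ncard_le_ncard horbit hS)

end Group

theorem char_dvd_orderOf_of_isParabolic {K : Type*} [Field K] [NeZero (2 : K)] (p : ℕ)
    [Fact p.Prime] [CharP K p] {g : GL (Fin 2) K} (hg : g.IsParabolic) : p ∣ orderOf g := by
  by_contra hp
  obtain ⟨s, n, hgsn, -, hn⟩ := isParabolic_iff_exists.1 hg
  have hpow : g.val ^ p = scalar (Fin 2) (s ^ p) := by
    rw [hgsn, add_pow_char_of_commute p (scalar_commute s (fun r ↦ mul_comm _ _) n),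
      pow_eq_zero_of_le (Fact.out : p.Prime).two_le hn, add_zero, map_pow]
  obtain ⟨m, hm⟩ := exists_pow_eq_self_of_coprime
    ((Nat.Prime.coprime_iff_not_dvd Fact.out).2 hp)
  refine hg.1 ⟨(s ^ p) ^ m, ?_⟩
  rw [map_pow, ← hpow, ← Units.val_pow_eq_pow_val, ← Units.val_pow_eq_pow_val, hm]

theorem not_isParabolic_of_mem {K : Type*} [Field K] [NeZero (2 : K)] (p : ℕ)
    [Fact p.Prime] [CharP K p] {H : Subgroup (GL (Fin 2) K)} (hH : ¬ p ∣ Nat.card H)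
    {g : GL (Fin 2) K} (hg : g ∈ H) : ¬ g.IsParabolic := fun h ↦
  hH ((char_dvd_orderOf_of_isParabolic p h).trans (H.orderOf_dvd_natCard hg))

theorem isDiag_fin_two_iff {α : Type*} [Zero α] {A : Matrix (Fin 2) (Fin 2) α} :
    A.IsDiag ↔ A 0 1 = 0 ∧ A 1 0 = 0 := by
  simp [IsDiag, Pairwise, Fin.forall_fin_two]

section Diagonal

variable {R : Type*} [CommRing R]

/-- The torus of diagonal matrices in `GL₂(R)`, as a homomorphism from pairs of units. -/
def diagonalGL : Rˣ × Rˣ →* GL (Fin 2) R where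
  toFun u := ⟨!![(u.1 : R), 0; 0, (u.2 : R)], !![((u.1⁻¹ : Rˣ) : R), 0; 0, ((u.2⁻¹ : Rˣ) : R)],
    by simp [one_fin_two], by simp [one_fin_two]⟩
  map_one' := by ext i j; fin_cases i <;> fin_cases j <;> rfl
  map_mul' u v := by ext i j; fin_cases i <;> fin_cases j <;> simp

@[simp]
theorem coe_diagonalGL (u : Rˣ × Rˣ) :
    (diagonalGL u).val = !![(u.1 : R), 0; 0, (u.2 : R)] := rfl

theorem det_diagonalGL (u : Rˣ × Rˣ) : (diagonalGL u).val.det = u.1 * u.2 := by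
  simp

theorem trace_mul_diagonalGL (y : GL (Fin 2) R) (u : Rˣ × Rˣ) :
    (y * diagonalGL u).val.trace = y 0 0 * u.1 + y 1 1 * u.2 := by
  simp [trace_fin_two, mul_apply]

theorem exists_diagonalGL_eq {g : GL (Fin 2) R} (hg : g.val.IsDiag) :
    ∃ u, diagonalGL u = g := by
  obtain ⟨h01, h10⟩ := isDiag_fin_two_iff.1 hg
  have hdet : IsUnit (g 0 0 * g 1 1) := by
    simpa [det_fin_two, h01, h10] using isUnits_det_units g
  obtain ⟨⟨u, hu⟩, ⟨v, hv⟩⟩ := IsUnit.mul_iff.1 hdet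
  refine ⟨(u, v), Units.ext ?_⟩
  rw [eta_fin_two g.val, h01, h10, ← hu, ← hv]
  rfl

theorem coe_conj_diagonalGL (u : Rˣ × Rˣ) (y : GL (Fin 2) R) :
    (diagonalGL u * y * (diagonalGL u)⁻¹).val =
      !![y 0 0, (u.1 / u.2 : Rˣ) * y 0 1; (u.2 / u.1 : Rˣ) * y 1 0, y 1 1] := by
  rw [← map_inv, Units.val_mul, Units.val_mul, coe_diagonalGL, coe_diagonalGL,
    eta_fin_two y.val, mul_fin_two, mul_fin_two]
  ext i j
  fin_cases i <;> fin_cases j <;> simp [div_eq_mul_inv, mul_right_comm]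

theorem centralizer_diagonalGL_le_range [NoZeroDivisors R] {u : Rˣ × Rˣ} (hu : u.1 ≠ u.2) :
    Subgroup.centralizer {diagonalGL u} ≤ (diagonalGL (R := R)).range := by
  intro x hx
  have hcomm := congrArg Units.val (Subgroup.mem_centralizer_singleton_iff.1 hx)
  have h01 : x 0 1 * u.2 = u.1 * x 0 1 := by simpa [mul_apply] using congrFun₂ hcomm 0 1
  have h10 : x 1 0 * u.1 = u.2 * x 1 0 := by simpa [mul_apply] using congrFun₂ hcomm 1 0
  have hsub : (u.1 - u.2 : R) ≠ 0 := sub_ne_zero.2 (Units.val_injective.ne hu)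
  refine exists_diagonalGL_eq (isDiag_fin_two_iff.2
    ⟨(mul_eq_zero_iff_left hsub).1 ?_, (mul_eq_zero_iff_left hsub).1 ?_⟩)
  · linear_combination -h01
  · linear_combination h10

theorem isDiag_of_discr_eq_zero {H : Subgroup (GL (Fin 2) R)} (hpar : ∀ g ∈ H, ¬ g.IsParabolic)
    {y : GL (Fin 2) R} (hyH : y ∈ H) (h : y.val.discr = 0) : y.val.IsDiag := by
  by_contra hdiag
  refine hpar y hyH ⟨?_, h⟩
  rintro ⟨a, ha⟩
  exact hdiag (ha ▸ isDiag_diagonal _)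

theorem isDiag_of_discr_mul_diagonalGL {H : Subgroup (GL (Fin 2) R)}
    (hpar : ∀ g ∈ H, ¬ g.IsParabolic) {y : GL (Fin 2) R} (hyH : y ∈ H) {u : Rˣ × Rˣ}
    (hu : diagonalGL u ∈ H) (h : (y * diagonalGL u).val.discr = 0) : y.val.IsDiag := by
  have hdiag := isDiag_fin_two_iff.1 (isDiag_of_discr_eq_zero hpar (mul_mem hyH hu) h)
  exact isDiag_fin_two_iff.2 (by simpa [mul_apply, Fin.sum_univ_two] using hdiag)

end Diagonal

section FieldOfOrderSeven

local instance fact_prime_seven : Fact (Nat.Prime 7) := ⟨by norm_num⟩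

local instance neZero_two_zmod_seven : NeZero (2 : ZMod 7) := ⟨by decide⟩

/-- The Sylow `3`-subgroup of `GL₂(F₇)` formed by the diagonal matrices whose entries are cube
roots of unity. -/
def cubeTorus : Subgroup (GL (Fin 2) (ZMod 7)) :=
  ((rootsOfUnity 3 (ZMod 7)).prod (rootsOfUnity 3 (ZMod 7))).map diagonalGL

theorem isPGroup_cubeTorus : IsPGroup 3 cubeTorus := by
  refine IsPGroup.map (fun u ↦ ⟨1, ?_⟩) diagonalGL
  obtain ⟨⟨u, v⟩, hu, hv⟩ := u
  exact Subtype.ext (Prod.ext hu hv)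

/-- The unit `2` of `F₇`, a primitive cube root of unity. -/
def unitTwo : (ZMod 7)ˣ := ⟨2, 4, by decide, by decide⟩

@[simp]
theorem coe_unitTwo : (unitTwo : ZMod 7) = 2 := rfl

theorem unitTwo_pow_three : unitTwo ^ 3 = 1 := by decide

theorem diagonalGL_unitTwo_pow_mem_cubeTorus (i j : ℕ) :
    diagonalGL (unitTwo ^ i, unitTwo ^ j) ∈ cubeTorus := by
  have hpow (k : ℕ) : unitTwo ^ k ∈ rootsOfUnity 3 (ZMod 7) :=
    pow_mem unitTwo_pow_three k
  exact ⟨_, ⟨hpow i, hpow j⟩, rfl⟩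

variable {H : Subgroup (GL (Fin 2) (ZMod 7))} {y : GL (Fin 2) (ZMod 7)}

/-- A triflection: a pseudo-reflection of order three with eigenvalues `1` and `2`, encoded by its
trace and determinant. Its inverse, with eigenvalues `1` and `4`, does not count as one. -/
def IsTriflection (g : GL (Fin 2) (ZMod 7)) : Prop :=
  g.val.trace = 3 ∧ g.val.det = 2

namespace IsTriflection

theorem conj (hy : IsTriflection y) (g : GL (Fin 2) (ZMod 7)) : IsTriflection (g * y * g⁻¹) := by
  rwa [IsTriflection, Units.val_mul, Units.val_mul, trace_units_conj, det_units_conj]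

theorem apply_one_one (hy : IsTriflection y) : y 1 1 = 3 - y 0 0 := by
  rw [← hy.1, trace_fin_two, add_sub_cancel_left]

theorem apply_mul_apply (hy : IsTriflection y) : y 0 1 * y 1 0 = y 0 0 * (3 - y 0 0) - 2 := by
  rw [← hy.apply_one_one, ← hy.2, det_fin_two, sub_sub_cancel]

theorem coe_eq (hy : IsTriflection y) : y.val = !![y 0 0, y 0 1; y 1 0, 3 - y 0 0] := by
  rw [← hy.apply_one_one]; exact eta_fin_two _

theorem coe_inv (hy : IsTriflection y) :
    (y⁻¹).val = (4 : ZMod 7) • !![3 - y 0 0, -y 0 1; -y 1 0, y 0 0] := by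
  rw [coe_units_inv, inv_def, hy.2, Ring.inverse_eq_inv',
    show (2 : ZMod 7)⁻¹ = 4 from inv_eq_of_mul_eq_one_right (by decide),
    adjugate_fin_two, hy.apply_one_one]

theorem coe_diagonalGL_unitTwo_mul_inv (hy : IsTriflection y) :
    (diagonalGL (unitTwo, unitTwo) * y⁻¹).val = !![3 - y 0 0, -y 0 1; -y 1 0, y 0 0] := by
  have h : (2 : ZMod 7) * 4 = 1 := rfl
  rw [Units.val_mul, hy.coe_inv]
  ext i j
  fin_cases i <;> fin_cases j <;> simp [← mul_assoc, h]

theorem diagonalGL_unitTwo_mul_inv (hy : IsTriflection y) :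
    IsTriflection (diagonalGL (unitTwo, unitTwo) * y⁻¹) := by
  rw [IsTriflection, hy.coe_diagonalGL_unitTwo_mul_inv, trace_fin_two_of, det_fin_two_of]
  refine ⟨by ring, ?_⟩
  linear_combination -hy.apply_mul_apply

end IsTriflection

theorem isTriflection_diagonalGL_unitTwo : IsTriflection (diagonalGL (unitTwo, 1)) := by
  constructor <;> decide

theorem diagonalGL_unitTwo_mul_inv_mem (hT : cubeTorus ≤ H) (hyH : y ∈ H) :
    diagonalGL (unitTwo, unitTwo) * y⁻¹ ∈ H :=
  mul_mem (hT (diagonalGL_unitTwo_pow_mem_cubeTorus 1 1)) (inv_mem hyH)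

namespace IsTriflection

theorem apply_zero_zero_mem (hpar : ∀ g ∈ H, ¬ g.IsParabolic) (hT : cubeTorus ≤ H)
    (hyH : y ∈ H) (hy : IsTriflection y) (hdiag : ¬ y.val.IsDiag) :
    y 0 0 ∈ ({4, 5, 6} : Set (ZMod 7)) := by
  have hdiscr (i : ℕ) : (2 ^ i * y 0 0 + (3 - y 0 0)) ^ 2 ≠ 4 * (2 * 2 ^ i) := fun h ↦ by
    refine hdiag (isDiag_of_discr_mul_diagonalGL hpar hyH
      (hT (diagonalGL_unitTwo_pow_mem_cubeTorus i 0)) ?_)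
    rw [discr_fin_two, trace_mul_diagonalGL, Units.val_mul, det_mul, hy.2, det_diagonalGL,
      hy.apply_one_one, Units.val_pow_eq_pow_val, Units.val_pow_eq_pow_val, coe_unitTwo]
    linear_combination h
  have h1 := hdiscr 1
  have h2 := hdiscr 2
  generalize y 0 0 = a at h1 h2 ⊢
  clear * - h1 h2
  revert a
  simp only [Set.mem_insert_iff, Set.mem_singleton_iff]
  decide

theorem conj_diagonalGL_unitTwo_apply_zero_zero (hy : IsTriflection y) :
    (y * diagonalGL (unitTwo, 1) * y⁻¹) 0 0 =
      4 * (2 * y 0 0 * (3 - y 0 0) - y 0 1 * y 1 0) := by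
  rw [Units.val_mul, Units.val_mul, hy.coe_inv]
  simp only [coe_diagonalGL, coe_unitTwo, Units.val_one, smul_of, smul_cons, smul_eq_mul, mul_neg,
    smul_empty, mul_apply, of_apply, cons_val', cons_val_fin_one, Fin.sum_univ_two, cons_val_zero,
    cons_val_one, mul_zero, add_zero, mul_one, zero_add]
  ring

theorem apply_zero_zero_of_isDiag (hy : IsTriflection y) (hdiag : y.val.IsDiag) :
    y 0 0 = 1 ∨ y 0 0 = 2 := by
  have h := hy.apply_mul_apply
  rw [(isDiag_fin_two_iff.1 hdiag).1, zero_mul] at h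
  have : (y 0 0 - 1) * (y 0 0 - 2) = 0 := by linear_combination h
  simpa [sub_eq_zero] using this

theorem apply_zero_zero_ne_three (hpar : ∀ g ∈ H, ¬ g.IsParabolic) (hT : cubeTorus ≤ H)
    (hyH : y ∈ H) (hy : IsTriflection y) : y 0 0 ≠ 3 := by
  by_cases hdiag : y.val.IsDiag
  · rcases hy.apply_zero_zero_of_isDiag hdiag with h | h <;> rw [h] <;> decide
  · rcases apply_zero_zero_mem hpar hT hyH hy hdiag with h | h | h <;> rw [h] <;> decide

theorem apply_zero_zero_eq (hpar : ∀ g ∈ H, ¬ g.IsParabolic) (hT : cubeTorus ≤ H)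
    (hyH : y ∈ H) (hy : IsTriflection y) (hdiag : ¬ y.val.IsDiag) : y 0 0 = 6 ∨ y 0 0 = 4 := by
  rcases apply_zero_zero_mem hpar hT hyH hy hdiag with h | h | h
  · exact .inr h
  · -- conjugating `diag(2, 1)` by `y` would give a triflection with corner entry `3`
    have hconj : y * diagonalGL (unitTwo, 1) * y⁻¹ ∈ H :=
      mul_mem (mul_mem hyH (hT (diagonalGL_unitTwo_pow_mem_cubeTorus 1 0))) (inv_mem hyH)
    refine absurd ?_ (apply_zero_zero_ne_three hpar hT hconj
      (isTriflection_diagonalGL_unitTwo.conj y))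
    rw [hy.conj_diagonalGL_unitTwo_apply_zero_zero, hy.apply_mul_apply, h]
    decide
  · exact .inl h

theorem apply_mul_apply_eq_one (hpar : ∀ g ∈ H, ¬ g.IsParabolic) (hT : cubeTorus ≤ H)
    (hyH : y ∈ H) (hy : IsTriflection y) (hdiag : ¬ y.val.IsDiag) : y 0 1 * y 1 0 = 1 := by
  rw [hy.apply_mul_apply]
  rcases apply_zero_zero_eq hpar hT hyH hy hdiag with h | h <;> rw [h] <;> decide

end IsTriflection

/-- The non-diagonal triflection that every subgroup of order `144` contains after a suitable
conjugation. -/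
def baseTriflection : GL (Fin 2) (ZMod 7) :=
  ⟨!![6, 1; 1, 4], !![2, 3; 3, 3], by decide, by decide⟩

theorem coe_baseTriflection : baseTriflection.val = !![6, 1; 1, 4] := rfl

theorem isTriflection_baseTriflection : IsTriflection baseTriflection := by
  constructor <;> decide

theorem IsTriflection.exists_conj_diagonalGL_eq_baseTriflection (hy : IsTriflection y)
    (h00 : y 0 0 = 6) (hmul : y 0 1 * y 1 0 = 1) :
    ∃ u, diagonalGL u * y * (diagonalGL u)⁻¹ = baseTriflection := by
  let u : (ZMod 7)ˣ := ⟨y 1 0, y 0 1, by rw [mul_comm, hmul], hmul⟩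
  have h11 : (3 - 6 : ZMod 7) = 4 := by decide
  have h01 : ((u / 1 : (ZMod 7)ˣ) : ZMod 7) * y 0 1 = 1 := by
    rw [div_one, mul_comm, ← hmul]
  have h10 : ((1 / u : (ZMod 7)ˣ) : ZMod 7) * y 1 0 = 1 := by
    rw [one_div, ← hmul]
    rfl
  refine ⟨(u, 1), Units.ext ?_⟩
  rw [coe_conj_diagonalGL, hy.apply_one_one, h00, coe_baseTriflection, h01, h10, h11]

theorem coe_baseTriflection_mul (hy : IsTriflection y) (h00 : y 0 0 = 6) (u : (ZMod 7)ˣ) :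
    (baseTriflection * diagonalGL (u, 1) * y).val =
      !![36 * (u : ZMod 7) + y 1 0, 6 * u * y 0 1 + 4; 6 * u + 4 * y 1 0, u * y 0 1 + 16] := by
  have h11 : (3 - 6 : ZMod 7) = 4 := by decide
  rw [Units.val_mul, Units.val_mul, hy.coe_eq, h00, h11, coe_baseTriflection, coe_diagonalGL,
    mul_fin_two, mul_fin_two]
  congrm !![?_, ?_; ?_, ?_] <;>
    simp only [of_apply, cons_val', cons_val_zero, cons_val_one, cons_val_fin_one,
      Units.val_one] <;> ring

theorem IsTriflection.apply_zero_one_pow_three (hpar : ∀ g ∈ H, ¬ g.IsParabolic)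
    (hT : cubeTorus ≤ H) (hbase : baseTriflection ∈ H) (hyH : y ∈ H) (hy : IsTriflection y)
    (h00 : y 0 0 = 6) (hmul : y 0 1 * y 1 0 = 1) : y 0 1 ^ 3 = 1 := by
  -- the hypothesis says that `baseTriflection * diag(2 ^ i, 1) * y` has discriminant zero
  have hprod (i : ℕ) (h : (36 * 2 ^ i + y 1 0 + (2 ^ i * y 0 1 + 16)) ^ 2 = 4 * (2 * 2 ^ i * 2)) :
      6 * 2 ^ i * y 0 1 + 4 = 0 := by
    have hmem := mul_mem (mul_mem hbase
      (hT (diagonalGL_unitTwo_pow_mem_cubeTorus i 0))) hyH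
    have hcoe := coe_baseTriflection_mul hy h00 (unitTwo ^ i)
    have hdet : (baseTriflection * diagonalGL (unitTwo ^ i, 1) * y).val.det = 2 * 2 ^ i * 2 := by
      rw [Units.val_mul, Units.val_mul, det_mul, det_mul, hy.2, isTriflection_baseTriflection.2]
      simp
    have hdiag := isDiag_of_discr_eq_zero hpar hmem (by
      rw [discr_fin_two, pow_zero, hdet, hcoe, trace_fin_two_of, sub_eq_zero]
      exact h)
    have h01 := (isDiag_fin_two_iff.1 hdiag).1
    rw [pow_zero, hcoe] at h01
    exact h01
  have h0 := hprod 0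
  have h2 := hprod 2
  generalize y 0 1 = b at *
  generalize y 1 0 = c at *
  clear * - h0 h2 hmul
  revert b c
  decide

/-- The eight triflections of the order-`144` subgroup that contains `cubeTorus` and
`baseTriflection`: the diagonal matrices with entries `1, 2`, the matrices `(6, b; b⁻¹, 4)` with
`b ^ 3 = 1`, and the adjugates of the latter. -/
def standardTriflections : Set (GL (Fin 2) (ZMod 7)) :=
  {y | IsTriflection y ∧
    (y.val.IsDiag ∨ y 0 0 = 6 ∧ y 0 1 ^ 3 = 1 ∨ y 0 0 = 4 ∧ (-y 0 1) ^ 3 = 1)}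

theorem triflections_subset_standardTriflections (hpar : ∀ g ∈ H, ¬ g.IsParabolic)
    (hT : cubeTorus ≤ H) (hbase : baseTriflection ∈ H) :
    {y | y ∈ H ∧ IsTriflection y} ⊆ standardTriflections := by
  rintro y ⟨hyH, hy⟩
  refine ⟨hy, or_iff_not_imp_left.2 fun hdiag ↦ ?_⟩
  have hmul := hy.apply_mul_apply_eq_one hpar hT hyH hdiag
  refine (hy.apply_zero_zero_eq hpar hT hyH hdiag).imp (fun h ↦ ⟨h, ?_⟩) (fun h ↦ ⟨h, ?_⟩)
  · exact hy.apply_zero_one_pow_three hpar hT hbase hyH h hmul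
  · have hdual := hy.diagonalGL_unitTwo_mul_inv.apply_zero_one_pow_three hpar hT
      hbase (diagonalGL_unitTwo_mul_inv_mem hT hyH)
    rw [hy.coe_diagonalGL_unitTwo_mul_inv] at hdual
    refine hdual ?_ (by simpa using hmul)
    change 3 - y 0 0 = 6
    rw [h]
    decide

theorem ncard_standardTriflections_le : standardTriflections.ncard ≤ 8 := by
  let corners : Finset (ZMod 7 × ZMod 7) := {p | p.2 = 0 ∧ (p.1 = 1 ∨ p.1 = 2) ∨
    p.1 = 6 ∧ p.2 ^ 3 = 1 ∨ p.1 = 4 ∧ (-p.2) ^ 3 = 1}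
  have hcard : corners.card = 8 := by decide
  rw [← hcard, ← Set.ncard_coe_finset]
  refine Set.ncard_le_ncard_of_injOn (fun y ↦ (y 0 0, y 0 1)) ?_ ?_
  · rintro y ⟨hy, hdiag | h⟩
    · simp [corners, (isDiag_fin_two_iff.1 hdiag).1, hy.apply_zero_zero_of_isDiag hdiag]
    · simp [corners, h]
  · rintro y ⟨hy, hy'⟩ z ⟨hz, hz'⟩ hyz
    obtain ⟨h00, h01⟩ := Prod.mk.inj hyz
    have hdiag {x} (hx : x ∈ standardTriflections) (h : x 0 1 = 0) : x 1 0 = 0 := by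
      rcases hx.2 with hx | hx | hx
      · exact (isDiag_fin_two_iff.1 hx).2
      · simp [h] at hx
      · simp [h] at hx
    have h10 : y 1 0 = z 1 0 := by
      by_cases hb : y 0 1 = 0
      · rw [hdiag ⟨hy, hy'⟩ hb, hdiag ⟨hz, hz'⟩ (h01 ▸ hb)]
      · refine mul_left_cancel₀ hb ?_
        rw [hy.apply_mul_apply, h01, hz.apply_mul_apply, h00]
    refine Units.ext ?_
    rw [hy.coe_eq, hz.coe_eq, h00, h01, h10]

theorem card_centralizer_inf_le (h : ∀ x ∈ H, x * baseTriflection * x⁻¹ ∈ standardTriflections) :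
    Nat.card (Subgroup.centralizer {diagonalGL (unitTwo, 1)} ⊓ H : Subgroup _) ≤ 18 := by
  let K : Subgroup ((ZMod 7)ˣ × (ZMod 7)ˣ) := ((powMonoidHom 3).comp divMonoidHom).ker
  have hK : Nat.card K = 18 := by
    rw [Nat.card_eq_fintype_card]; decide
  have hle : Subgroup.centralizer {diagonalGL (unitTwo, 1)} ⊓ H ≤ K.map diagonalGL := by
    rintro x ⟨hx, hxH⟩
    obtain ⟨u, rfl⟩ := centralizer_diagonalGL_le_range (by decide) hx
    refine ⟨u, ?_, rfl⟩
    -- conjugation by `diag(a, b)` multiplies the upper right entry of `baseTriflection` by `a / b`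
    have hu := (h _ hxH).2
    rw [coe_conj_diagonalGL, coe_baseTriflection, isDiag_fin_two_iff] at hu
    have h64 : (6 : ZMod 7) ≠ 4 := by decide
    have hcube : ((u.1 / u.2 : (ZMod 7)ˣ) : ZMod 7) ^ 3 = 1 := by
      simpa [h64, -Units.val_div_eq_div_val] using hu
    exact Units.ext hcube
  rw [← hK]
  exact (Subgroup.card_le_of_le hle).trans (Nat.card_image_le (Set.toFinite _))

theorem ncard_diagonal_triflections_le :
    {y : GL (Fin 2) (ZMod 7) | IsTriflection y ∧ y.val.IsDiag}.ncard ≤ 2 := by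
  have hmaps : Set.MapsTo (fun y ↦ y 0 0)
      {y : GL (Fin 2) (ZMod 7) | IsTriflection y ∧ y.val.IsDiag} {1, 2} :=
    fun y hy ↦ hy.1.apply_zero_zero_of_isDiag hy.2
  refine (Set.ncard_le_ncard_of_injOn _ hmaps fun y hy z hz hyz ↦ Units.ext ?_).trans
    (Set.ncard_pair (by decide)).le
  obtain ⟨hy01, hy10⟩ := isDiag_fin_two_iff.1 hy.2
  obtain ⟨hz01, hz10⟩ := isDiag_fin_two_iff.1 hz.2
  replace hyz : y 0 0 = z 0 0 := hyz
  rw [hy.1.coe_eq, hz.1.coe_eq, hy01, hy10, hz01, hz10, hyz]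

theorem exists_triflection_not_isDiag (hH : 72 < Nat.card H) (hd : diagonalGL (unitTwo, 1) ∈ H) :
    ∃ y ∈ H, IsTriflection y ∧ ¬ y.val.IsDiag := by
  by_contra! hdiag
  have hC : Nat.card (Subgroup.centralizer {diagonalGL (unitTwo, 1)} ⊓ H : Subgroup _) ≤ 36 :=
    calc _ ≤ Nat.card (diagonalGL (R := ZMod 7)).range :=
          Subgroup.card_le_of_le (inf_le_left.trans (centralizer_diagonalGL_le_range (by decide)))
      _ ≤ Nat.card ((ZMod 7)ˣ × (ZMod 7)ˣ) := Finite.card_range_le _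
      _ = 36 := by rw [Nat.card_prod, Nat.card_eq_fintype_card, ZMod.card_units 7]
  have hconj (g) (hg : g ∈ H) : g * diagonalGL (unitTwo, 1) * g⁻¹ ∈
      {y : GL (Fin 2) (ZMod 7) | IsTriflection y ∧ y.val.IsDiag} :=
    have ht := isTriflection_diagonalGL_unitTwo.conj g
    ⟨ht, hdiag _ (mul_mem (mul_mem hg hd) (inv_mem hg)) ht⟩
  have := (card_le_ncard_mul_card_centralizer_inf (Set.toFinite _) hconj).trans
    (Nat.mul_le_mul ncard_diagonal_triflections_le hC)
  omega

theorem card_le_ncard_mul_eighteen_of_conj_mem {S : Set (GL (Fin 2) (ZMod 7))}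
    (hd : ∀ x ∈ H, x * diagonalGL (unitTwo, 1) * x⁻¹ ∈ S)
    (hb : ∀ x ∈ H, x * baseTriflection * x⁻¹ ∈ standardTriflections) :
    Nat.card H ≤ S.ncard * 18 :=
  (card_le_ncard_mul_card_centralizer_inf S.toFinite hd).trans
    (Nat.mul_le_mul_left _ (card_centralizer_inf_le hb))

theorem diagonalGL_unitTwo_mem_standardTriflections :
    diagonalGL (unitTwo, 1) ∈ standardTriflections :=
  ⟨isTriflection_diagonalGL_unitTwo, .inl (isDiag_fin_two_iff.2 ⟨rfl, rfl⟩)⟩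

theorem baseTriflection_mem_standardTriflections : baseTriflection ∈ standardTriflections :=
  ⟨isTriflection_baseTriflection, .inr (.inl ⟨rfl, one_pow 3⟩)⟩

theorem card_normalizer_standardTriflections_le :
    Nat.card (Subgroup.normalizer standardTriflections) ≤ 144 :=
  (card_le_ncard_mul_eighteen_of_conj_mem
    (fun _ hx ↦ (hx _).1 diagonalGL_unitTwo_mem_standardTriflections)
    (fun _ hx ↦ (hx _).1 baseTriflection_mem_standardTriflections)).trans
    (Nat.mul_le_mul_right 18 ncard_standardTriflections_le)

theorem le_normalizer_setOf_mem_and_isTriflection :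
    H ≤ Subgroup.normalizer {y | y ∈ H ∧ IsTriflection y} := by
  intro x hx y
  refine ⟨fun h ↦ ⟨mul_mem (mul_mem hx h.1) (inv_mem hx), h.2.conj x⟩, fun h ↦ ⟨?_, ?_⟩⟩
  · simpa [mul_assoc] using mul_mem (mul_mem (inv_mem hx) h.1) hx
  · simpa [mul_assoc] using h.2.conj x⁻¹

theorem eq_normalizer_standardTriflections (hH : Nat.card H = 144) (hT : cubeTorus ≤ H)
    (hbase : baseTriflection ∈ H) :
    H = Subgroup.normalizer standardTriflections := by
  have hpar : ∀ g ∈ H, ¬ g.IsParabolic := fun _ ↦ not_isParabolic_of_mem 7 (by norm_num [hH])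
  have hsub := triflections_subset_standardTriflections hpar hT hbase
  have hconj {y} (hy : y ∈ H) (ht : IsTriflection y) (x) (hx : x ∈ H) :
      x * y * x⁻¹ ∈ {y | y ∈ H ∧ IsTriflection y} :=
    (le_normalizer_setOf_mem_and_isTriflection hx y).1 ⟨hy, ht⟩
  have hcard : Nat.card H ≤ {y | y ∈ H ∧ IsTriflection y}.ncard * 18 :=
    card_le_ncard_mul_eighteen_of_conj_mem (hconj (hT (diagonalGL_unitTwo_pow_mem_cubeTorus 1 0))
      isTriflection_diagonalGL_unitTwo)
      fun x hx ↦ hsub (hconj hbase isTriflection_baseTriflection x hx)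
  have heq : {y | y ∈ H ∧ IsTriflection y} = standardTriflections :=
    Set.eq_of_subset_of_ncard_le hsub (by have := ncard_standardTriflections_le; omega)
  refine Subgroup.eq_of_le_of_card_ge (heq ▸ le_normalizer_setOf_mem_and_isTriflection) ?_
  rw [hH]
  exact card_normalizer_standardTriflections_le

theorem exists_triflection_apply_zero_zero_eq_six (hH : Nat.card H = 144) (hT : cubeTorus ≤ H) :
    ∃ y ∈ H, IsTriflection y ∧ y 0 0 = 6 ∧ y 0 1 * y 1 0 = 1 := by
  have hpar : ∀ g ∈ H, ¬ g.IsParabolic := fun _ ↦ not_isParabolic_of_mem 7 (by norm_num [hH])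
  obtain ⟨y, hyH, hy, hdiag⟩ := exists_triflection_not_isDiag (by omega)
    (hT (diagonalGL_unitTwo_pow_mem_cubeTorus 1 0))
  have hmul := hy.apply_mul_apply_eq_one hpar hT hyH hdiag
  rcases hy.apply_zero_zero_eq hpar hT hyH hdiag with h | h
  · exact ⟨y, hyH, hy, h, hmul⟩
  · refine ⟨_, diagonalGL_unitTwo_mul_inv_mem hT hyH, hy.diagonalGL_unitTwo_mul_inv, ?_⟩
    rw [hy.coe_diagonalGL_unitTwo_mul_inv]
    refine ⟨?_, by simpa using hmul⟩
    change 3 - y 0 0 = 6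
    rw [h]
    decide

theorem cubeTorus_le_conj_diagonalGL_smul (hT : cubeTorus ≤ H)
    (u : (ZMod 7)ˣ × (ZMod 7)ˣ) :
    cubeTorus ≤ MulAut.conj (diagonalGL u) • H := by
  rintro _ ⟨v, hv, rfl⟩
  rw [Subgroup.mem_pointwise_smul_iff_inv_smul_mem, ← map_inv, MulAut.smul_def, MulAut.conj_apply,
    ← map_inv, ← map_inv, ← map_mul, ← map_mul, inv_inv, mul_comm, mul_inv_cancel_left]
  exact hT ⟨v, hv, rfl⟩

theorem exists_conj_smul_eq_normalizer_standardTriflections (hH : Nat.card H = 144) :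
    ∃ g : GL (Fin 2) (ZMod 7),
      MulAut.conj g • H = Subgroup.normalizer standardTriflections := by
  have hcard (g : GL (Fin 2) (ZMod 7)) : Nat.card (MulAut.conj g • H : Subgroup _) = 144 := by
    rw [← hH, Nat.card_congr (Subgroup.equivSMul (MulAut.conj g) H).toEquiv]
  have hGL : Nat.card (GL (Fin 2) (ZMod 7)) = 2016 := by
    rw [Matrix.card_GL_field, ZMod.card]
    simp [Fin.prod_univ_two]
  have hindex : ¬ 3 ∣ H.index := by
    have hmul := H.index_mul_card
    rw [hH, hGL] at hmul
    omega
  obtain ⟨g, hT⟩ := exists_le_conj_smul_of_isPGroup isPGroup_cubeTorus hindex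
  obtain ⟨y, hyH, hy, h00, hmul⟩ := exists_triflection_apply_zero_zero_eq_six (hcard g) hT
  obtain ⟨u, hbase⟩ := hy.exists_conj_diagonalGL_eq_baseTriflection h00 hmul
  refine ⟨diagonalGL u * g, ?_⟩
  refine eq_normalizer_standardTriflections (hcard _) ?_ ?_
  · rw [map_mul, mul_smul]
    exact cubeTorus_le_conj_diagonalGL_smul hT _
  · rw [map_mul, mul_smul, ← hbase]
    exact Subgroup.smul_mem_pointwise_smul _ _ _ hyH

end FieldOfOrderSeven

/-- Any two subgroups of `GL₂(F₇)` of order `144 = 2⁴·3²` are conjugate in `GL₂(F₇)`. -/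
theorem subgroups_GL2_F7_order_144_conjugate
    (H K : Subgroup (GL (Fin 2) (ZMod 7)))
    (hH : Nat.card H = 144) (hK : Nat.card K = 144) :
    ∃ g : GL (Fin 2) (ZMod 7),
      Subgroup.map (MulAut.conj g).toMonoidHom H = K := by
  obtain ⟨g, hg⟩ := exists_conj_smul_eq_normalizer_standardTriflections hH
  obtain ⟨k, hk⟩ := exists_conj_smul_eq_normalizer_standardTriflections hK
  refine ⟨k⁻¹ * g, ?_⟩
  change MulAut.conj (k⁻¹ * g) • H = K
  rw [map_mul, mul_smul, hg, ← hk, map_inv, inv_smul_smul]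
end
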